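/- Let f : V → [0,∞] be weakly lower semicontinuous on a separable real Hilbert space V, let A : V → W be a nonzero bounded linear operator, set γ = ‖A‖², let d ∈ W, and define 𝒥(x) = f(x) + ½‖Ax−d‖²_W and 𝒥_γ(x) = S_γ²(f)(x) + ½‖Ax−d‖²_W. Let G be the set of global minimizers of 𝒥 and G_γ the set of global minimizers of 𝒥_γ. Then G ⊆ G_γ, and every connected component of G_γ contains a point of G. -/

import Mathlib

open scoped InnerProductSpace RealInnerProductSpace ENNReal Topology
open Filter

noncomputable section

/-- The S-transform `S_γ(f)(y) = sup_x ( -f(x) - (γ/2)‖x-y‖² )` for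
extended-real-valued functions on a real inner product space. -/
def SgammaE {V : Type*} [NormedAddCommGroup V] [InnerProductSpace ℝ V]
    (γ : ℝ) (f : V → EReal) (y : V) : EReal :=
  ⨆ x : V, (-(f x) - (((γ / 2) * ‖x - y‖ ^ 2 : ℝ) : EReal))

/-- The S-transform of a `[0,∞]`-valued function. -/
def Sgamma {V : Type*} [NormedAddCommGroup V] [InnerProductSpace ℝ V]
    (γ : ℝ) (f : V → ℝ≥0∞) (y : V) : EReal :=
  SgammaE γ (fun x => (f x : EReal)) y

/-- The twice iterated S-transform `S_γ²(f) = S_γ(S_γ(f))`. -/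
def Sgamma2 {V : Type*} [NormedAddCommGroup V] [InnerProductSpace ℝ V]
    (γ : ℝ) (f : V → ℝ≥0∞) : V → EReal :=
  SgammaE γ (Sgamma γ f)

/-- Convexity for extended-real-valued functions. -/
def EConvexOn {V : Type*} [NormedAddCommGroup V] [InnerProductSpace ℝ V]
    (h : V → EReal) : Prop :=
  ∀ x y : V, ∀ a b : ℝ, 0 ≤ a → 0 ≤ b → a + b = 1 →
    h (a • x + b • y) ≤ (a : EReal) * h x + (b : EReal) * h y

/-- Closed balls of a Hilbert space are compact in the weak topology. -/
theorem isCompact_toWeakSpace_image_closedBall {V : Type*} [NormedAddCommGroup V]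
    [InnerProductSpace ℝ V] [CompleteSpace V] (c : V) (r : ℝ) :
    IsCompact (toWeakSpace ℝ V '' Metric.closedBall c r) := by
  let φ : WeakDual ℝ V → WeakSpace ℝ V := fun l =>
    toWeakSpace ℝ V ((InnerProductSpace.toDual ℝ V).symm (WeakDual.toStrongDual l))
  have hφ : Continuous φ := by
    refine WeakBilin.continuous_of_continuous_eval _ fun l => ?_
    have h (x : WeakDual ℝ V) :
        l ((InnerProductSpace.toDual ℝ V).symm (WeakDual.toStrongDual x)) =
          x ((InnerProductSpace.toDual ℝ V).symm l) := by
      rw [← InnerProductSpace.toDual_symm_apply (y := l), real_inner_comm,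
        InnerProductSpace.toDual_symm_apply, WeakDual.toStrongDual_apply]
    exact (WeakDual.eval_continuous ((InnerProductSpace.toDual ℝ V).symm l)).congr
      fun x => (h x).symm
  convert (WeakDual.isCompact_closedBall (InnerProductSpace.toDual ℝ V c) r).image hφ using 1
  ext y
  constructor
  · rintro ⟨x, hx, rfl⟩
    refine ⟨StrongDual.toWeakDual (InnerProductSpace.toDual ℝ V x), ?_, ?_⟩
    · simpa using hx
    · simp [φ]
  · rintro ⟨l, hl, rfl⟩
    refine ⟨_, ?_, rfl⟩
    rw [Metric.mem_closedBall, ← (InnerProductSpace.toDual ℝ V).dist_map]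
    simpa using hl

/-- The distance to a point is weakly lower semicontinuous. -/
theorem lowerSemicontinuous_weakSpace_norm_sub {V : Type*} [NormedAddCommGroup V]
    [InnerProductSpace ℝ V] (c : V) :
    LowerSemicontinuous (α := WeakSpace ℝ V) fun x : V => ‖x - c‖ := by
  refine lowerSemicontinuous_iff_isClosed_preimage.2 fun t => ?_
  have h := (convex_closedBall c t).toWeakSpace_closure ℝ
  rw [Metric.isClosed_closedBall.closure_eq] at h
  have h' : IsClosed (toWeakSpace ℝ V '' Metric.closedBall c t) := h ▸ isClosed_closure
  convert h' using 1
  ext x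
  refine Iff.trans ?_
    ((toWeakSpace ℝ V).injective.mem_set_image (s := Metric.closedBall c t) (a := x)).symm
  exact mem_closedBall_iff_norm.symm

/-- A weakly lower semicontinuous `[0,∞]`-valued function has proximal points. -/
theorem exists_forall_add_sq_norm_sub_le {V : Type*} [NormedAddCommGroup V]
    [InnerProductSpace ℝ V] [CompleteSpace V] {f : V → ℝ≥0∞}
    (hf : LowerSemicontinuous (α := WeakSpace ℝ V) f) {γ : ℝ} (hγ : 0 < γ) (c : V) :
    ∃ z, ∀ y, f z + ENNReal.ofReal (γ / 2 * ‖z - c‖ ^ 2) ≤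
      f y + ENNReal.ofReal (γ / 2 * ‖y - c‖ ^ 2) := by
  by_cases htop : ∀ x, f x = ⊤
  · exact ⟨c, fun y => by simp [htop]⟩
  push Not at htop
  obtain ⟨x₁, hx₁⟩ := htop
  let h : V → ℝ≥0∞ := fun y => f y + ENNReal.ofReal (γ / 2 * ‖y - c‖ ^ 2)
  have hlsc : LowerSemicontinuous (α := WeakSpace ℝ V) h := by
    refine LowerSemicontinuous.add (α := WeakSpace ℝ V) hf ?_
    have h1 : (fun x : V => ENNReal.ofReal (γ / 2 * ‖x - c‖ ^ 2)) =
        (fun t : ℝ => ENNReal.ofReal (γ / 2 * (max t 0) ^ 2)) ∘ fun x : V => ‖x - c‖ := by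
      ext x
      simp
    rw [h1]
    refine Continuous.comp_lowerSemicontinuous (α := WeakSpace ℝ V) 
      (ENNReal.continuous_ofReal.comp (by fun_prop))
      (lowerSemicontinuous_weakSpace_norm_sub c) fun s t hst => ?_
    exact ENNReal.ofReal_le_ofReal (by gcongr)
  have hh₁ : h x₁ ≠ ⊤ := ENNReal.add_ne_top.2 ⟨hx₁, ENNReal.ofReal_ne_top⟩
  set r : ℝ := √(2 / γ * (h x₁).toReal) with hr
  have hr2 : γ / 2 * r ^ 2 = (h x₁).toReal := by
    rw [hr, Real.sq_sqrt (by positivity)]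
    field_simp
  have hout (y : V) (hy : r ≤ ‖y - c‖) : h x₁ ≤ h y := by
    calc h x₁ = ENNReal.ofReal (γ / 2 * r ^ 2) := by rw [hr2, ENNReal.ofReal_toReal hh₁]
      _ ≤ ENNReal.ofReal (γ / 2 * ‖y - c‖ ^ 2) := by gcongr
      _ ≤ h y := le_add_self
  obtain ⟨z, -, hz⟩ := LowerSemicontinuousOn.exists_isMinOn (α := WeakSpace ℝ V) (f := h)
    (s := toWeakSpace ℝ V '' Metric.closedBall c r)
    ((Metric.nonempty_closedBall.2 (Real.sqrt_nonneg _)).image _)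
    (isCompact_toWeakSpace_image_closedBall c r) (hlsc.lowerSemicontinuousOn _)
  have hin (y : V) (hy : ‖y - c‖ ≤ r) : h z ≤ h y :=
    hz ⟨y, mem_closedBall_iff_norm.2 hy, rfl⟩
  have hz₁ : h z ≤ h x₁ := by
    refine hin x₁ (Real.le_sqrt_of_sq_le ?_)
    have h2 : γ / 2 * ‖x₁ - c‖ ^ 2 ≤ (h x₁).toReal :=
      (ENNReal.ofReal_le_iff_le_toReal hh₁).1 le_add_self
    calc ‖x₁ - c‖ ^ 2 = 2 / γ * (γ / 2 * ‖x₁ - c‖ ^ 2) := by field_simp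
      _ ≤ _ := by gcongr
  refine ⟨z, fun y => ?_⟩
  rcases le_total ‖y - c‖ r with hy | hy
  · exact hin y hy
  · exact hz₁.trans (hout y hy)

theorem Sgamma2_le_coe_iff {V : Type*} [NormedAddCommGroup V] [InnerProductSpace ℝ V]
    (γ : ℝ) (f : V → ℝ≥0∞) (x : V) (r : ℝ) :
    Sgamma2 γ f x ≤ (r : EReal) ↔
      ∀ w, -Sgamma γ f w ≤ ((r + γ / 2 * ‖w - x‖ ^ 2 : ℝ) : EReal) := by
  simp only [Sgamma2, SgammaE, iSup_le_iff, EReal.coe_add]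
  exact forall_congr' fun w =>
    EReal.sub_le_iff_le_add (.inl (EReal.coe_ne_bot _)) (.inl (EReal.coe_ne_top _))

theorem Sgamma2_le {V : Type*} [NormedAddCommGroup V] [InnerProductSpace ℝ V]
    (γ : ℝ) (f : V → ℝ≥0∞) (x : V) : Sgamma2 γ f x ≤ (f x : EReal) := by
  refine iSup_le fun w => EReal.sub_le_of_le_add ?_
  rw [EReal.neg_le, EReal.neg_add (.inr (EReal.coe_ne_top _)) (.inr (EReal.coe_ne_bot _)), norm_sub_rev]
  exact le_iSup (fun x : V => -(f x : EReal) - ((γ / 2 * ‖x - w‖ ^ 2 : ℝ) : EReal)) x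

/-- A lower bound for the Moreau envelope at `c` yields one for the double S-transform. -/
theorem sub_le_Sgamma2 {V : Type*} [NormedAddCommGroup V] [InnerProductSpace ℝ V]
    {γ : ℝ} {f : V → ℝ≥0∞} {c : V} {b : EReal}
    (hb : ∀ y, b ≤ (f y : EReal) + ((γ / 2 * ‖y - c‖ ^ 2 : ℝ) : EReal)) (x : V) :
    b - ((γ / 2 * ‖x - c‖ ^ 2 : ℝ) : EReal) ≤ Sgamma2 γ f x := by
  have h : b ≤ -Sgamma γ f c := by
    refine EReal.le_neg_of_le_neg (iSup_le fun y => ?_)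
    rw [← EReal.neg_add (.inr (EReal.coe_ne_top _)) (.inr (EReal.coe_ne_bot _))]
    exact EReal.neg_le_neg_iff.2 (hb y)
  rw [norm_sub_rev]
  exact (EReal.sub_le_sub h le_rfl).trans
    (le_iSup (fun w : V => -Sgamma γ f w - ((γ / 2 * ‖w - x‖ ^ 2 : ℝ) : EReal)) c)

/-- The sublevel sets of `S_γ²(f) + (γ/2)‖· - c‖²` are convex. -/
theorem convex_setOf_Sgamma2_le {V : Type*} [NormedAddCommGroup V] [InnerProductSpace ℝ V]
    (γ : ℝ) (f : V → ℝ≥0∞) (c : V) (r : ℝ) :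
    Convex ℝ {y | Sgamma2 γ f y ≤ ((r - γ / 2 * ‖y - c‖ ^ 2 : ℝ) : EReal)} := by
  have key (w y : V) : r - γ / 2 * ‖y - c‖ ^ 2 + γ / 2 * ‖w - y‖ ^ 2 =
      r + γ / 2 * (‖w‖ ^ 2 - ‖c‖ ^ 2) + γ * ⟪c - w, y⟫ := by
    rw [norm_sub_sq_real, norm_sub_sq_real, inner_sub_left, real_inner_comm]
    ring
  intro x hx y hy a b ha hb hab
  simp only [Set.mem_ofPred_eq, Sgamma2_le_coe_iff, key] at hx hy ⊢
  intro w
  have hmin := le_min (hx w) (hy w)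
  rw [← EReal.coe_strictMono.monotone.map_min] at hmin
  refine hmin.trans (EReal.coe_le_coe ?_)
  rw [inner_add_right, real_inner_smul_right, real_inner_smul_right]
  set p := ⟪c - w, x⟫
  set q := ⟪c - w, y⟫
  set s := r + γ / 2 * (‖w‖ ^ 2 - ‖c‖ ^ 2)
  calc min (s + γ * p) (s + γ * q)
      = a * min (s + γ * p) (s + γ * q) + b * min (s + γ * p) (s + γ * q) := by
        rw [← add_mul, hab, one_mul]
    _ ≤ a * (s + γ * p) + b * (s + γ * q) := by
        gcongr
        · exact min_le_left _ _
        · exact min_le_right _ _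
    _ = (a + b) * s + γ * (a * p + b * q) := by ring
    _ = _ := by rw [hab, one_mul]

/-- The least squares term is majorized by a multiple of the squared distance to the gradient
step, up to a constant that makes the bound sharp at the base point. -/
theorem exists_half_sq_norm_sub_le {V W : Type*}
    [NormedAddCommGroup V] [InnerProductSpace ℝ V] [CompleteSpace V]
    [NormedAddCommGroup W] [InnerProductSpace ℝ W] [CompleteSpace W]
    (A : V →L[ℝ] W) (hA : A ≠ 0) (d : W) (x : V) :
    ∃ c : V, ∀ y, 1 / 2 * ‖A y - d‖ ^ 2 ≤ ‖A‖ ^ 2 / 2 * ‖y - c‖ ^ 2 +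
      (1 / 2 * ‖A x - d‖ ^ 2 - ‖A‖ ^ 2 / 2 * ‖x - c‖ ^ 2) := by
  have hγ : ‖A‖ ≠ 0 := norm_ne_zero_iff.2 hA
  set g : V := (‖A‖ ^ 2)⁻¹ • ContinuousLinearMap.adjoint A (A x - d) with hg
  refine ⟨x - g, fun y => ?_⟩
  have h1 : A y - d = A (y - x) + (A x - d) := by rw [map_sub]; abel
  have h2 : y - (x - g) = (y - x) + g := by abel
  have h3 : ‖A‖ ^ 2 * ⟪y - x, g⟫ = ⟪A (y - x), A x - d⟫ := by
    rw [hg, real_inner_smul_right, ContinuousLinearMap.adjoint_inner_right]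
    field_simp
  have h4 : ‖A (y - x)‖ ^ 2 ≤ ‖A‖ ^ 2 * ‖y - x‖ ^ 2 := by
    rw [← mul_pow]
    gcongr
    exact A.le_opNorm _
  rw [h1, h2, sub_sub_cancel, norm_add_sq_real, norm_add_sq_real]
  linarith

/-- Every value of the relaxed functional is bounded below by the value of the original
functional at some point; this point can be joined to any global minimizer of the relaxed
functional inside the set of global minimizers. -/
theorem exists_value_le_and_segment_subset {V W : Type*}
    [NormedAddCommGroup V] [InnerProductSpace ℝ V] [CompleteSpace V]
    [NormedAddCommGroup W] [InnerProductSpace ℝ W] [CompleteSpace W]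
    {f : V → ℝ≥0∞} (hf : LowerSemicontinuous (α := WeakSpace ℝ V) f)
    (A : V →L[ℝ] W) (hA : A ≠ 0) (d : W) (x : V) :
    ∃ z, (f z : EReal) + ((1 / 2 * ‖A z - d‖ ^ 2 : ℝ) : EReal) ≤
        Sgamma2 (‖A‖ ^ 2) f x + ((1 / 2 * ‖A x - d‖ ^ 2 : ℝ) : EReal) ∧
      (f z ≠ ⊤ →
        Sgamma2 (‖A‖ ^ 2) f x + ((1 / 2 * ‖A x - d‖ ^ 2 : ℝ) : EReal) ≤
          (f z : EReal) + ((1 / 2 * ‖A z - d‖ ^ 2 : ℝ) : EReal) →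
        ∀ y ∈ segment ℝ x z,
          Sgamma2 (‖A‖ ^ 2) f y + ((1 / 2 * ‖A y - d‖ ^ 2 : ℝ) : EReal) ≤
            Sgamma2 (‖A‖ ^ 2) f x + ((1 / 2 * ‖A x - d‖ ^ 2 : ℝ) : EReal)) := by
  have hγ : 0 < ‖A‖ ^ 2 := by have := norm_pos_iff.2 hA; positivity
  obtain ⟨c, hc⟩ := exists_half_sq_norm_sub_le A hA d x
  obtain ⟨z, hz⟩ := exists_forall_add_sq_norm_sub_le hf hγ c
  have hz' (y : V) : (f z : EReal) + ((‖A‖ ^ 2 / 2 * ‖z - c‖ ^ 2 : ℝ) : EReal) ≤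
      (f y : EReal) + ((‖A‖ ^ 2 / 2 * ‖y - c‖ ^ 2 : ℝ) : EReal) := by
    have h := EReal.coe_ennreal_le_coe_ennreal_iff.2 (hz y)
    rwa [EReal.coe_ennreal_add, EReal.coe_ennreal_add, EReal.coe_ennreal_ofReal,
      EReal.coe_ennreal_ofReal, max_eq_left (by positivity), max_eq_left (by positivity)] at h
  have hlow := sub_le_Sgamma2 hz' x
  have hup := Sgamma2_le (‖A‖ ^ 2) f z
  have hlow' : (f z : EReal) + ((‖A‖ ^ 2 / 2 * ‖z - c‖ ^ 2 +
      (1 / 2 * ‖A x - d‖ ^ 2 - ‖A‖ ^ 2 / 2 * ‖x - c‖ ^ 2) : ℝ) : EReal) ≤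
        Sgamma2 (‖A‖ ^ 2) f x + ((1 / 2 * ‖A x - d‖ ^ 2 : ℝ) : EReal) := by
    refine le_of_eq_of_le ?_ (add_le_add_left hlow _)
    rw [sub_eq_add_neg (_ + _ : EReal), ← EReal.coe_neg, add_assoc, add_assoc, ← EReal.coe_add, ← EReal.coe_add]
    congr 2
    ring
  refine ⟨z, (add_le_add_right (EReal.coe_le_coe (hc z)) _).trans hlow', ?_⟩
  intro hfz hx y hy
  obtain ⟨F, hF⟩ : ∃ F : ℝ, (f z : EReal) = F :=
    ⟨(f z).toReal, (EReal.coe_ennreal_toReal hfz).symm⟩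
  rw [hF] at hx hlow' hup
  have hyC := (convex_setOf_Sgamma2_le (‖A‖ ^ 2) f c (F + ‖A‖ ^ 2 / 2 * ‖z - c‖ ^ 2)).segment_subset
    (x := x) (y := z) ?_ ?_ hy
  · refine le_trans ?_ hlow'
    refine (add_le_add_left hyC _).trans ?_
    rw [← EReal.coe_add, ← EReal.coe_add]
    exact EReal.coe_le_coe (by linarith [hc y])
  · have h : Sgamma2 (‖A‖ ^ 2) f x ≤
        ((F + 1 / 2 * ‖A z - d‖ ^ 2 - 1 / 2 * ‖A x - d‖ ^ 2 : ℝ) : EReal) := by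
      rw [EReal.coe_sub, EReal.le_sub_iff_add_le (.inl (EReal.coe_ne_bot _))
        (.inl (EReal.coe_ne_top _)), EReal.coe_add]
      exact hx
    exact h.trans (EReal.coe_le_coe (by linarith [hc z]))
  · exact hup.trans_eq (by simp)

/-- case `γ = ‖A‖²`. With `f` weakly l.s.c., `A ≠ 0`, `γ = ‖A‖²`,
`𝒥(x) = f(x) + ½‖Ax-d‖²` and `𝒥_γ(x) = S_γ²(f)(x) + ½‖Ax-d‖²`: the set `G` of global
minimizers of `𝒥` is contained in the set `G_γ` of global minimizers of `𝒥_γ`, and every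
connected component of `G_γ` contains a point of `G`. -/
theorem statement18 {V W : Type*}
    [NormedAddCommGroup V] [InnerProductSpace ℝ V] [CompleteSpace V]
    [TopologicalSpace.SeparableSpace V]
    [NormedAddCommGroup W] [InnerProductSpace ℝ W] [CompleteSpace W]
    [TopologicalSpace.SeparableSpace W]
    (f : V → ℝ≥0∞) (hwlsc : LowerSemicontinuous (α := WeakSpace ℝ V) f)
    (A : V →L[ℝ] W) (hA : A ≠ 0) (d : W) :
    ({x : V | ∀ y : V,
        (f x : EReal) + ((1 / 2 * ‖A x - d‖ ^ 2 : ℝ) : EReal) ≤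
          (f y : EReal) + ((1 / 2 * ‖A y - d‖ ^ 2 : ℝ) : EReal)} ⊆
      {x : V | ∀ y : V,
        Sgamma2 (‖A‖ ^ 2) f x + ((1 / 2 * ‖A x - d‖ ^ 2 : ℝ) : EReal) ≤
          Sgamma2 (‖A‖ ^ 2) f y + ((1 / 2 * ‖A y - d‖ ^ 2 : ℝ) : EReal)}) ∧
    (∀ x ∈ {x : V | ∀ y : V,
        Sgamma2 (‖A‖ ^ 2) f x + ((1 / 2 * ‖A x - d‖ ^ 2 : ℝ) : EReal) ≤
          Sgamma2 (‖A‖ ^ 2) f y + ((1 / 2 * ‖A y - d‖ ^ 2 : ℝ) : EReal)},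
      ∃ z ∈ {x : V | ∀ y : V,
          (f x : EReal) + ((1 / 2 * ‖A x - d‖ ^ 2 : ℝ) : EReal) ≤
            (f y : EReal) + ((1 / 2 * ‖A y - d‖ ^ 2 : ℝ) : EReal)},
        z ∈ connectedComponentIn
          {x : V | ∀ y : V,
            Sgamma2 (‖A‖ ^ 2) f x + ((1 / 2 * ‖A x - d‖ ^ 2 : ℝ) : EReal) ≤
              Sgamma2 (‖A‖ ^ 2) f y + ((1 / 2 * ‖A y - d‖ ^ 2 : ℝ) : EReal)} x) := by
  have hle (y : V) := add_le_add_left (Sgamma2_le (‖A‖ ^ 2) f y)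
    ((1 / 2 * ‖A y - d‖ ^ 2 : ℝ) : EReal)
  refine ⟨fun x hx y => ?_, fun x hx => ?_⟩
  · obtain ⟨z, hz, -⟩ := exists_value_le_and_segment_subset hwlsc A hA d y
    exact (hle x).trans ((hx z).trans hz)
  · obtain ⟨z, hz, hseg⟩ := exists_value_le_and_segment_subset hwlsc A hA d x
    have hzG (y : V) := hz.trans ((hx y).trans (hle y))
    by_cases hfz : f z = ⊤
    · refine ⟨x, fun y => le_of_le_of_eq le_top ?_, mem_connectedComponentIn hx⟩
      have h := hzG y
      rw [hfz, EReal.coe_ennreal_top, EReal.top_add_coe, top_le_iff] at h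
      exact h.symm
    · refine ⟨z, hzG, ?_⟩
      exact (convex_segment x z).isPreconnected.subset_connectedComponentIn
        (left_mem_segment ℝ x z)
        (fun y hy w => (hseg hfz ((hx z).trans (hle z)) y hy).trans (hx w))
        (right_mem_segment ℝ x z)
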